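/- Almost-supermartingale rate lemma: let (w_N, F_N) be a nonnegative adapted stochastic sequence satisfying E(w_N | F_{N−1}) ≤ (1 − μ/N) w_{N−1} + d_N h_N / N^{1+p} almost surely for all N ≥ N₁, where μ > p + κ, each d_N is F_{N−1}-measurable, nonnegative and almost surely bounded, and (h_N) is a positive sequence, nonincreasing for N ≥ N₁, with h_{N−1}/h_N ≤ 1 + κ/N for all N ≥ N₁ and (log N)/(N h_N) → 0. Then for every ν > 1, w_N = o((log N)^ν h_N / N^p) almost surely as N → ∞. -/

import Mathlib

open MeasureTheory Filter

lemma nonneg_supermartingale_conv {Ω : Type} {m0 : MeasurableSpace Ω} (P : Measure Ω)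
    [IsFiniteMeasure P] (G : Filtration ℕ m0) (S : ℕ → Ω → ℝ) (hS : Supermartingale S G P)
    (h0 : ∀ n ω, 0 ≤ S n ω) :
    ∀ᵐ ω ∂P, ∃ c, Tendsto (fun n => S n ω) atTop (nhds c) := by
  have hb : ∀ n, eLpNorm ((-S) n) 1 P ≤ ((∫ ω, S 0 ω ∂P).toNNReal : ENNReal) := by
    intro n
    have h1 : eLpNorm ((-S) n) 1 P = ENNReal.ofReal (∫ ω, S n ω ∂P) := by
      rw [Pi.neg_apply, eLpNorm_neg, eLpNorm_one_eq_lintegral_enorm,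
        ofReal_integral_eq_lintegral_ofReal (hS.integrable n) (Eventually.of_forall (h0 n))]
      refine lintegral_congr fun ω => ?_
      rw [Real.enorm_eq_ofReal (h0 n ω)]
    rw [h1]
    have h2 := hS.setIntegral_le (Nat.zero_le n) (MeasurableSet.univ)
    simp only [setIntegral_univ] at h2
    exact ENNReal.ofReal_le_ofReal h2
  filter_upwards [hS.neg.exists_ae_tendsto_of_bdd hb] with ω ⟨c, hc⟩
  exact ⟨-c, by simpa using hc.neg⟩

lemma truncated_conv {Ω : Type} {m0 : MeasurableSpace Ω} (P : Measure Ω)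
    [IsFiniteMeasure P] (G : Filtration ℕ m0) (w d : ℕ → Ω → ℝ) (a c : ℕ → ℝ)
    (ha : ∀ n, 0 ≤ a n) (hc : ∀ n, 0 ≤ c n) (hca : ∀ n, c (n + 1) ≤ c n)
    (hw : ∀ n, StronglyMeasurable[G n] (w n)) (hw0 : ∀ n ω, 0 ≤ w n ω)
    (hwi : ∀ n, Integrable (w n) P)
    (hd : ∀ n, StronglyMeasurable[G n] (d n))
    (hcond : ∀ n, ∀ᵐ ω ∂P, a (n + 1) * (P[w (n + 1) | G n]) ω
      ≤ a n * w n ω + d n ω * (c n - c (n + 1))) (K : ℝ) (hK : 0 ≤ K) :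
    ∀ᵐ ω ∂P, (∀ n, d n ω ≤ K) →
      ∃ B : ℝ, ∀ n, a n * w n ω ≤ B := by
  set A : ℕ → Set Ω := fun n => {ω | ∀ j < n, d j ω ≤ K} with hA
  have hAm : ∀ n, MeasurableSet[G n] (A (n + 1)) := by
    intro n
    have : A (n + 1) = ⋂ j, ⋂ (_ : j < n + 1), {ω | d j ω ≤ K} := by
      ext ω; simp [hA]
    rw [this]
    refine MeasurableSet.iInter fun j => MeasurableSet.iInter fun hj => ?_
    have := ((hd j).mono (G.mono (Nat.lt_succ_iff.mp hj))).measurable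
    exact this measurableSet_Iic
  have hAm' : ∀ n, MeasurableSet[G n] (A n) := by
    intro n
    cases n with
    | zero => simp [hA]
    | succ n => exact G.mono (Nat.le_succ n) _ (hAm n)
  set S : ℕ → Ω → ℝ := fun n => (A n).indicator (a n • w n) + fun _ => K * c n with hSdef
  have hint : ∀ n, Integrable ((A n).indicator (a n • w n)) P := fun n =>
    ((hwi n).smul (a n)).indicator (G.le n _ (hAm' n))
  have hS : Supermartingale S G P := by
    refine supermartingale_nat ?_ ?_ ?_
    · intro n
      exact (((hw n).const_smul (a n)).indicator (hAm' n)).add stronglyMeasurable_const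
    · intro n
      exact (hint n).add (integrable_const _)
    · intro n
      have e1 := condExp_add (hint (n + 1)) (integrable_const (μ := P) (K * c (n + 1))) (G n)
      have e2 := condExp_indicator (m := G n) ((hwi (n + 1)).smul (a (n + 1))) (hAm n)
      have e3 := condExp_smul (μ := P) (a (n + 1)) (w (n + 1)) (G n)
      rw [condExp_const (G.le n)] at e1
      filter_upwards [e1, e2, e3, hcond n] with ω h1 h2 h3 h4
      have h1' : (P[S (n + 1) | G n]) ω = _ := h1
      rw [h1', Pi.add_apply, h2]
      simp only [hSdef, Pi.add_apply]
      by_cases hω : ω ∈ A (n + 1)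
      · have hω' : ω ∈ A n := fun j hj => hω j (hj.trans (Nat.lt_succ_self n))
        rw [Set.indicator_of_mem hω, Set.indicator_of_mem hω', h3]
        simp only [Pi.smul_apply, smul_eq_mul]
        have := mul_le_mul_of_nonneg_right (hω n (Nat.lt_succ_self n))
          (sub_nonneg.2 (hca n))
        linarith
      · rw [Set.indicator_of_notMem hω]
        have h5 : 0 ≤ (A n).indicator (a n • w n) ω :=
          Set.indicator_nonneg (fun x _ => mul_nonneg (ha n) (hw0 n x)) ω
        have := mul_le_mul_of_nonneg_left (hca n) hK
        linarith
  have h0 : ∀ n ω, 0 ≤ S n ω := by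
    intro n ω
    have h5 : 0 ≤ (A n).indicator (a n • w n) ω :=
      Set.indicator_nonneg (fun x _ => mul_nonneg (ha n) (hw0 n x)) ω
    exact add_nonneg h5 (mul_nonneg hK (hc n))
  filter_upwards [nonneg_supermartingale_conv P G S hS h0] with ω ⟨l, hl⟩ hω
  obtain ⟨B, hB⟩ := hl.bddAbove_range
  refine ⟨B, fun n => ?_⟩
  have h1 := hB ⟨n, rfl⟩
  have h2 : ω ∈ A n := fun j _ => hω j
  simp only [hSdef, Pi.add_apply, Set.indicator_of_mem h2, Pi.smul_apply, smul_eq_mul] at h1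
  have := mul_nonneg hK (hc n)
  linarith

lemma log_sum_step (δ x : ℝ) (hδ : 0 < δ) (hx : 1 < x) :
    1 / ((x + 1) * Real.log (x + 1) ^ (1 + δ)) ≤
      δ⁻¹ * Real.log x ^ (-δ) - δ⁻¹ * Real.log (x + 1) ^ (-δ) := by
  have hl : 0 < Real.log x := Real.log_pos hx
  have hL : 0 < Real.log (x + 1) := Real.log_pos (by linarith)
  set l := Real.log x with hldef
  set L := Real.log (x + 1) with hLdef
  have hdiff : 1 / (x + 1) ≤ L - l := by
    have h1 := Real.log_le_sub_one_of_pos (x := x / (x + 1)) (by positivity)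
    rw [Real.log_div (by positivity) (by positivity)] at h1
    have : x / (x + 1) - 1 = - (1 / (x + 1)) := by field_simp; ring
    linarith
  have hr : 1 + δ * (1 - l / L) ≤ (l / L) ^ (-δ) := by
    rw [Real.rpow_def_of_pos (by positivity)]
    have h1 := Real.add_one_le_exp (Real.log (l / L) * -δ)
    have h2 := Real.log_le_sub_one_of_pos (x := l / L) (by positivity)
    nlinarith
  rw [Real.div_rpow hl.le hL.le] at hr
  have hP : 0 < L ^ (-δ) := Real.rpow_pos_of_pos hL _
  rw [le_div_iff₀ hP] at hr
  have e : L ^ (1 + δ) = L / L ^ (-δ) := by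
    rw [Real.rpow_add hL, Real.rpow_one, Real.rpow_neg hL.le]; field_simp
  have e2 : 1 / ((x + 1) * L ^ (1 + δ)) = (1 / (x + 1)) * (L ^ (-δ) / L) := by
    rw [e]; field_simp
  rw [e2]
  calc (1 / (x + 1)) * (L ^ (-δ) / L) ≤ (L - l) * (L ^ (-δ) / L) := by gcongr
    _ = δ⁻¹ * ((1 + δ * (1 - l / L)) * L ^ (-δ) - L ^ (-δ)) := by field_simp; ring
    _ ≤ δ⁻¹ * (l ^ (-δ) - L ^ (-δ)) := by gcongr
    _ = _ := by ring

lemma coef_step (p κ mu x : ℝ) (hp : 0 ≤ p) (hκ : 0 < κ) (hx : 0 < x)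
    (_hmx : mu ≤ x + 1) (hx2 : p * (x + 1) ≤ (mu - κ) * x) :
    (1 - mu / (x + 1)) * (1 + κ / (x + 1)) * (x + 1) ^ p ≤ x ^ p := by
  have hx1 : 0 < x + 1 := by linarith
  have h1 : (1 - mu / (x + 1)) ≤ Real.exp (- (mu / (x + 1))) := by
    have := Real.add_one_le_exp (- (mu / (x + 1))); linarith
  have h2 : (1 + κ / (x + 1)) ≤ Real.exp (κ / (x + 1)) := by
    have := Real.add_one_le_exp (κ / (x + 1)); linarith
  have h3 : (1 - mu / (x + 1)) * (1 + κ / (x + 1)) ≤ Real.exp (- ((mu - κ) / (x + 1))) := by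
    calc _ ≤ Real.exp (- (mu / (x + 1))) * Real.exp (κ / (x + 1)) := by gcongr
      _ = _ := by rw [← Real.exp_add]; congr 1; ring
  have h4 : Real.log (x + 1) - Real.log x ≤ 1 / x := by
    have h1 := Real.log_le_sub_one_of_pos (x := (x + 1) / x) (by positivity)
    rw [Real.log_div (by positivity) (by positivity)] at h1
    have : (x + 1) / x - 1 = (1 / x) := by field_simp; ring
    linarith
  have h5 : p / x ≤ (mu - κ) / (x + 1) := by
    rw [div_le_div_iff₀ hx hx1]; exact hx2
  calc _ ≤ Real.exp (- ((mu - κ) / (x + 1))) * (x + 1) ^ p := by gcongr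
    _ = Real.exp (- ((mu - κ) / (x + 1)) + Real.log (x + 1) * p) := by
      rw [Real.rpow_def_of_pos hx1, ← Real.exp_add]
    _ ≤ Real.exp (Real.log x * p) := by
      apply Real.exp_le_exp.2
      have := mul_le_mul_of_nonneg_right h4 hp
      have e : 1 / x * p = p / x := by ring
      linarith
    _ = x ^ p := by rw [Real.rpow_def_of_pos hx]



/-- **Almost-supermartingale rate lemma (auxiliary Lemma 9).**
Let `(w_N, ℱ_N)` be a nonnegative adapted sequence with
`E(w_N | ℱ_{N-1}) ≤ (1 − μ/N) w_{N-1} + d_N h_N/N^{1+p}` a.s. for `N ≥ N₁`,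
where `μ > p + κ`, each `d_N` is `ℱ_{N-1}`-measurable, nonnegative and a.s.
bounded, and `(h_N)` is positive, nonincreasing for `N ≥ N₁`, with
`h_{N-1}/h_N ≤ 1 + κ/N` and `log N/(N h_N) → 0`.  Then for every `ν > 1`,
`w_N = o((log N)^ν h_N/N^p)` almost surely. -/
theorem almost_supermartingale_rate
    {Ω : Type} [MeasureSpace Ω] (hprob : IsProbabilityMeasure (volume : Measure Ω))
    (ℱ : Filtration ℕ (inferInstance : MeasurableSpace Ω))
    (p κ mu : ℝ) (hp : 0 ≤ p) (hκ : 0 < κ) (hmu : p + κ < mu)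
    (N₁ : ℕ) (hN₁ : 0 < N₁)
    (h : ℕ → ℝ) (hh_pos : ∀ N, 0 < h N)
    (hh_mono : ∀ N, N₁ ≤ N → h (N + 1) ≤ h N)
    (hh_ratio : ∀ N, N₁ ≤ N → h (N - 1) ≤ (1 + κ/N) * h N)
    (hh_log : Tendsto (fun N : ℕ => Real.log N / (N * h N)) atTop (nhds 0))
    (w : ℕ → Ω → ℝ)
    (hw_adapted : Adapted ℱ w)
    (hw_nonneg : ∀ N ω, 0 ≤ w N ω)
    (hw_int : ∀ N, Integrable (w N) volume)
    (d : ℕ → Ω → ℝ)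
    (hd_meas : ∀ N, StronglyMeasurable[ℱ (N - 1)] (d N))
    (hd_nonneg : ∀ N ω, 0 ≤ d N ω)
    (hd_bdd : ∀ᵐ ω ∂(volume : Measure Ω), ∃ C : ℝ, ∀ N, d N ω ≤ C)
    (hcond : ∀ N, N₁ ≤ N →
      ∀ᵐ ω ∂(volume : Measure Ω),
        (volume[w N | ℱ (N - 1)]) ω
          ≤ (1 - mu/N) * w (N - 1) ω + d N ω * h N / (N : ℝ) ^ ((1 : ℝ) + p)) :
    ∀ ν : ℝ, 1 < ν →
      ∀ᵐ ω ∂(volume : Measure Ω),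
        Tendsto (fun N : ℕ => w N ω * (N : ℝ) ^ p / (h N * (Real.log N) ^ ν))
          atTop (nhds 0) := by

  have := hprob
  intro ν hν
  obtain ⟨δ, hδ, hδν⟩ : ∃ δ : ℝ, 0 < δ ∧ 1 + δ < ν := ⟨(ν - 1) / 2, by linarith, by linarith⟩
  obtain ⟨M, hMN, hM2, hMmu, hMx⟩ : ∃ M : ℕ, N₁ ≤ M ∧ 2 ≤ M ∧ mu ≤ M ∧
      p / (mu - κ - p) ≤ M := by
    refine ⟨N₁ + 2 + ⌈mu⌉₊ + ⌈p / (mu - κ - p)⌉₊, by omega, by omega, ?_, ?_⟩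
    · have := Nat.le_ceil mu
      push_cast
      have h1 : (0:ℝ) ≤ N₁ := by positivity
      have h2 : (0:ℝ) ≤ ⌈p / (mu - κ - p)⌉₊ := by positivity
      linarith
    · have := Nat.le_ceil (p / (mu - κ - p))
      push_cast
      have h1 : (0:ℝ) ≤ N₁ := by positivity
      have h2 : (0:ℝ) ≤ ⌈mu⌉₊ := by positivity
      linarith
  set a : ℕ → ℝ := fun N => (N : ℝ) ^ p / (h N * Real.log N ^ (1 + δ)) with ha
  set c : ℕ → ℝ := fun N => δ⁻¹ * Real.log N ^ (-δ) with hc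
  have hlog0 : ∀ N : ℕ, 0 ≤ Real.log N := fun N => Real.log_natCast_nonneg N
  have ha0 : ∀ N, 0 ≤ a N := fun N => by
    have := (hh_pos N).le
    have := hlog0 N
    positivity
  have hc0 : ∀ N, 0 ≤ c N := fun N => by
    have := hlog0 N
    positivity
  have hcstep : ∀ N : ℕ, M ≤ N →
      1 / (((N + 1 : ℕ) : ℝ) * Real.log (N + 1 : ℕ) ^ (1 + δ)) ≤ c N - c (N + 1) := by
    intro N hN
    have : (1:ℝ) < N := by exact_mod_cast (by omega : 1 < N)
    have := log_sum_step δ N hδ this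
    simpa [hc] using this
  have hastep : ∀ N : ℕ, M ≤ N → (1 - mu / ((N + 1 : ℕ) : ℝ)) * a (N + 1) ≤ a N := by
    intro N hN
    have hNM : (M : ℝ) ≤ N := by exact_mod_cast hN
    have hN1 : (1:ℝ) < N := by exact_mod_cast (by omega : 1 < N)
    have hl : 0 < Real.log N := Real.log_pos hN1
    have hcoef := coef_step p κ mu N hp hκ (by linarith) (by linarith) (by
      have h1 : p / (mu - κ - p) ≤ N := hMx.trans hNM
      rw [div_le_iff₀ (by linarith)] at h1
      linarith)
    have hr := hh_ratio (N + 1) (by omega)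
    simp only [Nat.add_sub_cancel] at hr
    push_cast at hr
    simp only [ha]
    push_cast
    have hlL : Real.log N ≤ Real.log (N + 1 : ℝ) := Real.log_le_log (by linarith) (by linarith)
    have hL : 0 < Real.log (N + 1 : ℝ) := hl.trans_le hlL
    have hpN := hh_pos N
    have hpN1 := hh_pos (N + 1)
    have hm : 0 ≤ 1 - mu / ((N : ℝ) + 1) := by
      rw [sub_nonneg, div_le_one (by linarith)]; linarith
    have hinv : (h (N + 1))⁻¹ ≤ (1 + κ / ((N : ℝ) + 1)) * (h N)⁻¹ := by
      rw [← div_eq_mul_inv, le_div_iff₀ hpN, inv_mul_le_iff₀ hpN1]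
      linarith
    have hLl : (Real.log (N + 1 : ℝ) ^ (1 + δ))⁻¹ ≤ (Real.log N ^ (1 + δ))⁻¹ := by gcongr
    calc (1 - mu / ((N : ℝ) + 1)) *
          (((N : ℝ) + 1) ^ p / (h (N + 1) * Real.log ((N : ℝ) + 1) ^ (1 + δ)))
        = ((1 - mu / ((N : ℝ) + 1)) * ((N : ℝ) + 1) ^ p) *
          ((h (N + 1))⁻¹ * (Real.log (N + 1 : ℝ) ^ (1 + δ))⁻¹) := by
            rw [← mul_inv]; ring
      _ ≤ ((1 - mu / ((N : ℝ) + 1)) * ((N : ℝ) + 1) ^ p) *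
          (((1 + κ / ((N : ℝ) + 1)) * (h N)⁻¹) * (Real.log N ^ (1 + δ))⁻¹) := by gcongr
      _ = ((1 - mu / ((N : ℝ) + 1)) * (1 + κ / ((N : ℝ) + 1)) * ((N : ℝ) + 1) ^ p) *
          ((h N)⁻¹ * (Real.log N ^ (1 + δ))⁻¹) := by ring
      _ ≤ (N : ℝ) ^ p * ((h N)⁻¹ * (Real.log N ^ (1 + δ))⁻¹) := by gcongr
      _ = _ := by rw [div_eq_mul_inv, mul_inv]
  let G : Filtration ℕ (inferInstance : MeasurableSpace Ω) :=
    ⟨fun n => ℱ (n + M), fun i j hij => ℱ.mono (by omega), fun i => ℱ.le _⟩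
  have key : ∀ K : ℕ, ∀ᵐ ω ∂(volume : Measure Ω), (∀ n, d (n + M + 1) ω ≤ K) →
      ∃ B : ℝ, ∀ n, a (n + M) * w (n + M) ω ≤ B := by
    intro K
    refine truncated_conv volume G (fun n => w (n + M)) (fun n => d (n + M + 1))
      (fun n => a (n + M)) (fun n => c (n + M)) (fun n => ha0 _) (fun n => hc0 _) ?_
      (fun n => (hw_adapted (n + M)).stronglyMeasurable) (fun n => hw_nonneg _)
      (fun n => hw_int _) (fun n => hd_meas (n + M + 1)) ?_ K (Nat.cast_nonneg K)
    · intro n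
      have h1 := hcstep (n + M) (by omega)
      have h2 : 0 ≤ 1 / (((n + M + 1 : ℕ) : ℝ) * Real.log (n + M + 1 : ℕ) ^ (1 + δ)) := by
        have := hlog0 (n + M + 1)
        positivity
      have e : n + 1 + M = n + M + 1 := by omega
      simp only [e]
      linarith
    · intro n
      have e : n + 1 + M = n + M + 1 := by omega
      simp only [e]
      filter_upwards [hcond (n + M + 1) (by omega)] with ω hω
      have hω' : (volume[w (n + M + 1) | ℱ (n + M)]) ω ≤ _ := hω
      change a (n + M + 1) * (volume[w (n + M + 1) | ℱ (n + M)]) ω ≤ _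
      generalize hX : n + M = X at *
      have hXM : M ≤ X := by omega
      simp only [Nat.add_sub_cancel] at hω'
      have hY : (0:ℝ) < ((X + 1 : ℕ) : ℝ) := by positivity
      have hL : 0 < Real.log ((X + 1 : ℕ) : ℝ) :=
        Real.log_pos (by exact_mod_cast (by omega : 1 < X + 1))
      have hid : a (X + 1) * (h (X + 1) / ((X + 1 : ℕ) : ℝ) ^ (1 + p)) =
          1 / (((X + 1 : ℕ) : ℝ) * Real.log (X + 1 : ℕ) ^ (1 + δ)) := by
        simp only [ha]
        rw [Real.rpow_add hY, Real.rpow_one]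
        have := hh_pos (X + 1)
        have h2 := Real.rpow_pos_of_pos hY p
        have h3 := Real.rpow_pos_of_pos hL (1 + δ)
        field_simp
      calc _ ≤ a (X + 1) * ((1 - mu / ((X + 1 : ℕ) : ℝ)) * w X ω +
              d (X + 1) ω * h (X + 1) / ((X + 1 : ℕ) : ℝ) ^ (1 + p)) :=
            mul_le_mul_of_nonneg_left hω' (ha0 _)
        _ = ((1 - mu / ((X + 1 : ℕ) : ℝ)) * a (X + 1)) * w X ω +
              d (X + 1) ω * (a (X + 1) * (h (X + 1) / ((X + 1 : ℕ) : ℝ) ^ (1 + p))) := by ring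
        _ ≤ a X * w X ω + d (X + 1) ω * (c X - c (X + 1)) := by
            rw [hid]
            exact add_le_add (mul_le_mul_of_nonneg_right (hastep X hXM) (hw_nonneg _ _))
              (mul_le_mul_of_nonneg_left (hcstep X hXM) (hd_nonneg _ _))
  filter_upwards [ae_all_iff.2 key, hd_bdd] with ω hω ⟨C, hC⟩
  obtain ⟨B, hB⟩ := hω ⌈C⌉₊ (fun n => (hC _).trans (Nat.le_ceil C))
  have hlim : Tendsto (fun N : ℕ => B * Real.log N ^ (-(ν - 1 - δ))) atTop (nhds 0) := by
    have h1 := (tendsto_rpow_neg_atTop (y := ν - 1 - δ) (by linarith)).comp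
      (Real.tendsto_log_atTop.comp tendsto_natCast_atTop_atTop)
    simpa using h1.const_mul B
  refine squeeze_zero' ?_ ?_ hlim
  · refine Eventually.of_forall fun N => ?_
    have := (hh_pos N).le
    have := hlog0 N
    have := hw_nonneg N ω
    positivity
  · filter_upwards [eventually_ge_atTop M] with N hN
    have hN1 : (1:ℝ) < N := by exact_mod_cast (by omega : 1 < N)
    have hl : 0 < Real.log N := Real.log_pos hN1
    have h1 := hB (N - M)
    rw [Nat.sub_add_cancel hN] at h1
    have e : w N ω * (N : ℝ) ^ p / (h N * Real.log N ^ ν) =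
        (a N * w N ω) * Real.log N ^ (-(ν - 1 - δ)) := by
      have e1 : Real.log N ^ ν = Real.log N ^ (1 + δ) * Real.log N ^ (ν - 1 - δ) := by
        rw [← Real.rpow_add hl]; congr 1; ring
      rw [e1, Real.rpow_neg hl.le]
      simp only [ha]
      rw [div_eq_mul_inv, div_eq_mul_inv, mul_inv, mul_inv, mul_inv]
      ring
    rw [e]
    gcongr
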